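/- arXiv:1203.2401 — 2 statements merged into one kernel-verified Lean document; each statement's English description precedes it below -/
import Mathlib

section
/- For natural numbers n ≥ 1 and N with N ≥ 2n, one has cos(πn/(2N)) ≥ √((N − n)/N), with equality if and only if N = 2n. (Hence for N > 2n the bound cos(πn/(2N)) is strictly stronger than Sheil-Small's bound √((N − n)/N).) -/
theorem Real.cos_sq_pi_div_two_mul (x : ℝ) :
    Real.cos (Real.pi / 2 * x) ^ 2 = (1 + Real.sin (Real.pi / 2 * (1 - 2 * x))) / 2 := by
  rw [Real.cos_sq, ← Real.cos_pi_div_two_sub (Real.pi / 2 * (1 - 2 * x))]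
  ring_nf

theorem Real.sqrt_one_sub_lt_cos {x : ℝ} (hx₀ : 0 < x) (hx : x < 1 / 2) :
    Real.sqrt (1 - x) < Real.cos (Real.pi / 2 * x) := by
  have hcos : 0 < Real.cos (Real.pi / 2 * x) :=
    Real.cos_pos_of_mem_Ioo ⟨by nlinarith [Real.pi_pos], by nlinarith [Real.pi_pos]⟩
  rw [Real.sqrt_lt' hcos, Real.cos_sq_pi_div_two_mul]
  linarith [Real.lt_sin_mul (x := 1 - 2 * x) (by linarith) (by linarith)]

theorem Real.cos_pi_div_two_mul_half :
    Real.cos (Real.pi / 2 * (1 / 2)) = Real.sqrt (1 - 1 / 2) := by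
  have hcos : 0 ≤ Real.cos (Real.pi / 2 * (1 / 2)) :=
    Real.cos_nonneg_of_mem_Icc ⟨by linarith [Real.pi_pos], by linarith [Real.pi_pos]⟩
  rw [← Real.sqrt_sq hcos, Real.cos_sq_pi_div_two_mul]
  norm_num

/-- For natural numbers `n ≥ 1` and `N ≥ 2n`, one has
`cos (π n / (2N)) ≥ √((N − n)/N)`, with equality if and only if `N = 2n`. -/
theorem cos_ge_sqrt_sheil_small (n N : ℕ) (hn : 1 ≤ n) (hN : 2 * n ≤ N) :
    Real.sqrt (((N : ℝ) - n) / N) ≤ Real.cos (Real.pi * n / (2 * N)) ∧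
      (Real.cos (Real.pi * n / (2 * N)) = Real.sqrt (((N : ℝ) - n) / N) ↔ N = 2 * n) := by
  have hn₀ : (0 : ℝ) < n := by exact_mod_cast hn
  have hN₀ : (0 : ℝ) < N := by exact_mod_cast (by omega : 0 < N)
  have hsqrt : ((N : ℝ) - n) / N = 1 - n / N := by field_simp
  have hangle : Real.pi * n / (2 * N) = Real.pi / 2 * (n / N) := by field_simp
  rw [hsqrt, hangle]
  rcases hN.eq_or_lt with h | h
  · have hhalf : (n : ℝ) / N = 1 / 2 := by
      rw [← h]
      push_cast
      field_simp
    rw [hhalf, Real.cos_pi_div_two_mul_half]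
    exact ⟨le_rfl, iff_of_true rfl h.symm⟩
  · have hlt : (n : ℝ) / N < 1 / 2 := by
      have h' : (2 : ℝ) * n < N := by exact_mod_cast h
      rw [div_lt_div_iff₀ hN₀ two_pos]
      linarith
    have hstrict := Real.sqrt_one_sub_lt_cos (div_pos hn₀ hN₀) hlt
    exact ⟨hstrict.le, iff_of_false hstrict.ne' h.ne'⟩
end

section
/- For natural numbers n ≥ 1 and N with N ≥ 2n, one has cos(πn/(2N)) ≥ (1 + 16·log(N/(N − n)))^{-1}. (Hence for N ≥ 2n the bound cos(πn/(2N)) is at least as strong as the Rakhmanov–Shekhtman bound with absolute constant C = 16.) -/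
/-- For natural numbers `n ≥ 1` and `N ≥ 2n`, one has
`cos (π n / (2N)) ≥ (1 + 16 log (N/(N − n)))⁻¹`. -/
theorem cos_ge_rakhmanov_shekhtman (n N : ℕ) (hn : 1 ≤ n) (hN : 2 * n ≤ N) :
    (1 + 16 * Real.log ((N : ℝ) / ((N : ℝ) - n)))⁻¹ ≤
      Real.cos (Real.pi * n / (2 * N)) := by
  have hn' : (1 : ℝ) ≤ n := by exact_mod_cast hn
  have hN' : 2 * (n : ℝ) ≤ N := by exact_mod_cast hN
  have hNpos : (0 : ℝ) < N := by linarith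
  have hsub : (0 : ℝ) < N - n := by linarith
  obtain ⟨x, hx⟩ : ∃ x : ℝ, x = n / N := ⟨_, rfl⟩
  have hx0 : 0 < x := by rw [hx]; positivity
  have hx1 : x ≤ 1 / 2 := by rw [hx, div_le_iff₀ hNpos]; linarith
  have hlog : x ≤ Real.log ((N : ℝ) / (N - n)) := by
    have h := Real.one_sub_inv_le_log_of_pos (div_pos hNpos hsub)
    have hxe : 1 - ((N : ℝ) / (N - n))⁻¹ = x := by
      rw [hx, inv_div]
      field_simp
      ring
    rwa [hxe] at h
  have hcos : 1 - 5 / 4 * x ^ 2 ≤ Real.cos (Real.pi * n / (2 * N)) := by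
    have h := Real.one_sub_sq_div_two_le_cos (x := Real.pi * n / (2 * N))
    have harg : Real.pi * n / (2 * N) = Real.pi * x / 2 := by
      rw [hx]
      field_simp
    have hpi : Real.pi ^ 2 ≤ 10 := by
      nlinarith [Real.pi_lt_d2, Real.pi_pos]
    rw [harg] at h ⊢
    nlinarith [mul_le_mul_of_nonneg_right hpi (sq_nonneg x)]
  have hprod : 1 ≤ (1 - 5 / 4 * x ^ 2) * (1 + 16 * x) := by
    have : 0 ≤ x * (16 - 5 / 4 * x - 20 * x ^ 2) :=
      mul_nonneg hx0.le (by nlinarith)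
    linarith
  calc (1 + 16 * Real.log ((N : ℝ) / ((N : ℝ) - n)))⁻¹
      ≤ (1 + 16 * x)⁻¹ := by gcongr
    _ ≤ 1 - 5 / 4 * x ^ 2 := by
        rwa [inv_le_iff_one_le_mul₀ (by positivity)]
    _ ≤ Real.cos (Real.pi * n / (2 * N)) := hcos
end
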